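/- Let S be a subset of M containing infinitely many ideals with |S(x^{1/2})| = o(|S(x)|) as x → ∞. Then the following two assertions are equivalent: (i) for every γ ∈ ℝ, lim_{x → ∞} (1/|S(x)|) · |{m ∈ S(x) : N(m) ≥ 3, (ω(m) − log log N(m)) / √(log log N(m)) ≤ γ}| = Φ(γ); (ii) for every γ ∈ ℝ, lim_{x → ∞} (1/|S(x)|) · |{m ∈ S(x) : (ω(m) − log log x) / √(log log x) ≤ γ}| = Φ(γ). -/

import Mathlib

open Filter MeasureTheory Topology
open scoped BigOperators

noncomputable section

variable (K : Type) [Field K] [NumberField K]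

/-- The standard Gaussian distribution function Φ. -/
def gaussPhi (γ : ℝ) : ℝ :=
  (Real.sqrt (2 * Real.pi))⁻¹ * ∫ u in Set.Iic γ, Real.exp (-u ^ 2 / 2)

/-- Number of distinct prime ideal divisors of an ideal. -/
def omegaI (m : Ideal (NumberField.RingOfIntegers K)) : ℕ :=
  Nat.card {p : Ideal (NumberField.RingOfIntegers K) // p.IsPrime ∧ p ∣ m}

/-- The number of elements of `S` with norm at most `x`. -/
def countS (S : Set (Ideal (NumberField.RingOfIntegers K))) (x : ℝ) : ℕ :=
  Nat.card {m : Ideal (NumberField.RingOfIntegers K) //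
    m ∈ S ∧ (Ideal.absNorm m : ℝ) ≤ x}

theorem gaussPhi_continuous : Continuous gaussPhi := by
  have hint : Integrable (fun u : ℝ => Real.exp (-u ^ 2 / 2)) := by
    have := integrable_exp_neg_mul_sq (b := 1 / 2) (by norm_num)
    refine this.congr (Eventually.of_forall fun u => ?_)
    simp only
    congr 1
    ring
  have h : gaussPhi = fun γ => (Real.sqrt (2 * Real.pi))⁻¹ *
      ((∫ u in (0 : ℝ)..γ, Real.exp (-u ^ 2 / 2)) +
        ∫ u in Set.Iic (0 : ℝ), Real.exp (-u ^ 2 / 2)) := by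
    funext γ
    rw [← intervalIntegral.integral_Iic_sub_Iic hint.integrableOn hint.integrableOn]
    simp [gaussPhi]
  rw [h]
  have hc := intervalIntegral.continuous_primitive
    (fun a b => hint.intervalIntegrable (a := a) (b := b)) 0
  fun_prop

theorem tendsto_transfer (F G : ℝ → ℝ → ℝ) (e : ℝ → ℝ) (he : Tendsto e atTop (𝓝 0))
    (P : ℝ → ℝ) (hP : Continuous P)
    (h1 : ∀ γ ε : ℝ, 0 < ε → ∀ᶠ x in atTop, F γ x ≤ G (γ + ε) x + e x)
    (h2 : ∀ γ ε : ℝ, 0 < ε → ∀ᶠ x in atTop, G γ x ≤ F (γ + ε) x + e x)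
    (hF : ∀ γ, Tendsto (F γ) atTop (𝓝 (P γ))) (γ : ℝ) :
    Tendsto (G γ) atTop (𝓝 (P γ)) := by
  rw [Metric.tendsto_atTop']
  intro δ hδ
  obtain ⟨η, hη, hPη⟩ := Metric.continuous_iff.1 hP γ (δ / 4) (by linarith)
  have hp := hPη (γ + η / 2) (by rw [Real.dist_eq, abs_lt]; constructor <;> linarith)
  have hm := hPη (γ - η / 2) (by rw [Real.dist_eq, abs_lt]; constructor <;> linarith)
  have a1 := h1 (γ - η / 2) (η / 2) (by linarith)
  have a2 := h2 γ (η / 2) (by linarith)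
  have b1 := (Metric.tendsto_nhds.1 (hF (γ - η / 2))) (δ / 4) (by linarith)
  have b2 := (Metric.tendsto_nhds.1 (hF (γ + η / 2))) (δ / 4) (by linarith)
  have b3 := (Metric.tendsto_nhds.1 he) (δ / 4) (by linarith)
  have key : ∀ᶠ x in atTop, dist (G γ x) (P γ) < δ := by
    filter_upwards [a1, a2, b1, b2, b3] with x a1 a2 b1 b2 b3
    rw [sub_add_cancel] at a1
    rw [Real.dist_eq, abs_lt] at *
    constructor <;> linarith [b1.1, b1.2, b2.1, b2.2, b3.1, b3.2, hp.1, hp.2, hm.1, hm.2]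
  obtain ⟨N, hN⟩ := eventually_atTop.1 key
  exact ⟨N, fun x hx => hN x hx.le⟩

theorem sqrt_near {l L : ℝ} (hl : 1 ≤ l) (h1 : l ≤ L) (h2 : L ≤ l + 1) :
    Real.sqrt l ≤ Real.sqrt L ∧ Real.sqrt L ≤ Real.sqrt l + 1 := by
  refine ⟨Real.sqrt_le_sqrt h1, ?_⟩
  rw [Real.sqrt_le_left (by positivity)]
  nlinarith [Real.sq_sqrt (show 0 ≤ l by linarith), Real.sqrt_nonneg l]

theorem mul_near {γ a b : ℝ} (h1 : |a - b| ≤ 1) : γ * a ≤ γ * b + |γ| := by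
  have : γ * (a - b) ≤ |γ| * 1 :=
    (le_abs_self _).trans (by rw [abs_mul]; exact mul_le_mul_of_nonneg_left h1 (abs_nonneg _))
  linarith

theorem norm_step {w l L γ ε : ℝ} (hl : 1 ≤ l) (hL : 1 ≤ L) (hlL : |l - L| ≤ 1)
    (hε : 1 + |γ| ≤ ε * Real.sqrt L)
    (h : (w - l) / Real.sqrt l ≤ γ) : (w - L) / Real.sqrt L ≤ γ + ε := by
  have pl : 0 < Real.sqrt l := Real.sqrt_pos.2 (by linarith)
  have pL : 0 < Real.sqrt L := Real.sqrt_pos.2 (by linarith)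
  rw [div_le_iff₀ pl] at h
  rw [div_le_iff₀ pL]
  have hs : |Real.sqrt l - Real.sqrt L| ≤ 1 := by
    rw [abs_le] at *
    rcases le_total l L with hh | hh
    · have := sqrt_near hl hh (by linarith)
      constructor <;> linarith
    · have := sqrt_near hL hh (by linarith)
      constructor <;> linarith
  have := mul_near (γ := γ) hs
  rw [abs_le] at hlL
  linarith

/-- For large `x`, everything needed about `log log n` for `√x < n ≤ x`. -/
theorem loglog_near (C : ℝ) : ∀ᶠ x : ℝ in atTop, ∀ n : ℕ, x ^ ((1 : ℝ) / 2) < n → (n : ℝ) ≤ x →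
    3 ≤ n ∧ 1 ≤ Real.log (Real.log n) ∧ 1 ≤ Real.log (Real.log x) ∧
    |Real.log (Real.log n) - Real.log (Real.log x)| ≤ 1 ∧
    C ≤ Real.sqrt (Real.log (Real.log n)) ∧ C ≤ Real.sqrt (Real.log (Real.log x)) := by
  have t1 : Tendsto (fun x : ℝ => Real.log (Real.log x)) atTop atTop :=
    Real.tendsto_log_atTop.comp Real.tendsto_log_atTop
  filter_upwards [t1.eventually_ge_atTop (2 + C ^ 2), eventually_ge_atTop (9 : ℝ)]
    with x hx hx9 n h1 h2
  have hx0 : 0 < x := by linarith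
  have hsq : (3 : ℝ) ≤ x ^ ((1 : ℝ) / 2) := by
    rw [← Real.sqrt_eq_rpow]
    exact Real.le_sqrt_of_sq_le (by linarith)
  have hn3 : (3 : ℝ) < n := by linarith
  have hlx : 0 < Real.log x := Real.log_pos (by linarith)
  have hln : Real.log x / 2 ≤ Real.log n := by
    have := Real.log_le_log (by linarith) h1.le
    rw [Real.log_rpow hx0] at this
    linarith
  have hle : Real.log (n : ℝ) ≤ Real.log x := Real.log_le_log (by linarith) h2
  have e1 : Real.log (Real.log x) - Real.log 2 ≤ Real.log (Real.log n) := by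
    rw [← Real.log_div hlx.ne' (by norm_num)]
    exact Real.log_le_log (by linarith) hln
  have e2 : Real.log (Real.log n) ≤ Real.log (Real.log x) := Real.log_le_log (by linarith) hle
  have l2 : Real.log 2 ≤ 1 := by linarith [Real.log_two_lt_d9]
  have hC := sq_nonneg C
  refine ⟨by exact_mod_cast hn3.le, by linarith, by linarith, ?_,
    Real.le_sqrt_of_sq_le (by linarith), Real.le_sqrt_of_sq_le (by linarith)⟩
  rw [abs_le]
  constructor <;> linarith

theorem finite_le (x : ℝ) :
    {m : Ideal (NumberField.RingOfIntegers K) | (Ideal.absNorm m : ℝ) ≤ x}.Finite := by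
  refine (Ideal.finite_setOf_absNorm_le ⌊x⌋₊).subset fun m hm => ?_
  exact Nat.le_floor hm

theorem card_step (S : Set (Ideal (NumberField.RingOfIntegers K)))
    (p q : Ideal (NumberField.RingOfIntegers K) → Prop) (x y : ℝ)
    (h : ∀ m, m ∈ S → (Ideal.absNorm m : ℝ) ≤ x → y < (Ideal.absNorm m : ℝ) → p m → q m) :
    (Nat.card {m : Ideal (NumberField.RingOfIntegers K) //
        m ∈ S ∧ (Ideal.absNorm m : ℝ) ≤ x ∧ p m} : ℝ) / (countS K S x : ℝ) ≤
    (Nat.card {m : Ideal (NumberField.RingOfIntegers K) //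
        m ∈ S ∧ (Ideal.absNorm m : ℝ) ≤ x ∧ q m} : ℝ) / (countS K S x : ℝ) +
      (countS K S y : ℝ) / (countS K S x : ℝ) := by
  rw [← add_div]
  refine div_le_div_of_nonneg_right ?_ (Nat.cast_nonneg _)
  norm_cast
  change Set.ncard {m | _} ≤ Set.ncard {m | _} + Set.ncard {m | _}
  refine le_trans (Set.ncard_le_ncard ?_ ?_) (Set.ncard_union_le _ _)
  · rintro m ⟨hS, hx, hp⟩
    by_cases hy : (Ideal.absNorm m : ℝ) ≤ y
    · exact Or.inr ⟨hS, hy⟩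
    · exact Or.inl ⟨hS, hx, h m hS hx (not_le.1 hy) hp⟩
  · exact ((finite_le K x).subset fun m hm => hm.2.1).union
      ((finite_le K y).subset fun m hm => hm.2)

/-- For an infinite set `S` of nonzero ideals with `|S(√x)| = o(|S(x)|)`, the Gaussian
limit law for `(ω(m) - log log N(m))/√(log log N(m))` is equivalent to the Gaussian limit
law for `(ω(m) - log log x)/√(log log x)`. -/
theorem gaussian_normNm_iff_gaussian_x
    (S : Set (Ideal (NumberField.RingOfIntegers K)))
    (hS0 : 0 ∉ S) (hSinf : S.Infinite)
    (hShalf : (fun x : ℝ => (countS K S (x ^ ((1 : ℝ)/2)) : ℝ)) =o[atTop]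
      fun x : ℝ => (countS K S x : ℝ)) :
    (∀ γ : ℝ, Tendsto (fun x : ℝ =>
        (Nat.card {m : Ideal (NumberField.RingOfIntegers K) //
            m ∈ S ∧ (Ideal.absNorm m : ℝ) ≤ x ∧ 3 ≤ Ideal.absNorm m ∧
            ((omegaI K m : ℝ) - Real.log (Real.log (Ideal.absNorm m))) /
              Real.sqrt (Real.log (Real.log (Ideal.absNorm m))) ≤ γ} : ℝ) /
          (countS K S x : ℝ)) atTop (𝓝 (gaussPhi γ))) ↔
    (∀ γ : ℝ, Tendsto (fun x : ℝ =>
        (Nat.card {m : Ideal (NumberField.RingOfIntegers K) //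
            m ∈ S ∧ (Ideal.absNorm m : ℝ) ≤ x ∧
            ((omegaI K m : ℝ) - Real.log (Real.log x)) /
              Real.sqrt (Real.log (Real.log x)) ≤ γ} : ℝ) /
          (countS K S x : ℝ)) atTop (𝓝 (gaussPhi γ))) := by
  have he := hShalf.tendsto_div_nhds_zero
  have ev : ∀ γ ε : ℝ, 0 < ε → ∀ᶠ x : ℝ in atTop, ∀ n : ℕ, x ^ ((1 : ℝ) / 2) < n → (n : ℝ) ≤ x →
      3 ≤ n ∧ 1 ≤ Real.log (Real.log n) ∧ 1 ≤ Real.log (Real.log x) ∧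
      |Real.log (Real.log n) - Real.log (Real.log x)| ≤ 1 ∧
      1 + |γ| ≤ ε * Real.sqrt (Real.log (Real.log n)) ∧
      1 + |γ| ≤ ε * Real.sqrt (Real.log (Real.log x)) := by
    intro γ ε hε
    filter_upwards [loglog_near ((1 + |γ|) / ε)] with x hx n h1 h2
    obtain ⟨a, b, c, d, e, f⟩ := hx n h1 h2
    rw [div_le_iff₀' hε] at e f
    exact ⟨a, b, c, d, e, f⟩
  have h1 : ∀ γ ε : ℝ, 0 < ε → ∀ᶠ x : ℝ in atTop, 
        (Nat.card {m : Ideal (NumberField.RingOfIntegers K) //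
            m ∈ S ∧ (Ideal.absNorm m : ℝ) ≤ x ∧ 3 ≤ Ideal.absNorm m ∧
            ((omegaI K m : ℝ) - Real.log (Real.log (Ideal.absNorm m))) /
              Real.sqrt (Real.log (Real.log (Ideal.absNorm m))) ≤ γ} : ℝ) /
          (countS K S x : ℝ) ≤
        (Nat.card {m : Ideal (NumberField.RingOfIntegers K) //
            m ∈ S ∧ (Ideal.absNorm m : ℝ) ≤ x ∧
            ((omegaI K m : ℝ) - Real.log (Real.log x)) /
              Real.sqrt (Real.log (Real.log x)) ≤ (γ + ε)} : ℝ) /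
          (countS K S x : ℝ) + (countS K S (x ^ ((1 : ℝ)/2)) : ℝ) / (countS K S x : ℝ) := fun γ ε hε => by
    filter_upwards [ev γ ε hε] with x hx
    exact card_step K S
      (fun m => 3 ≤ Ideal.absNorm m ∧
            ((omegaI K m : ℝ) - Real.log (Real.log (Ideal.absNorm m))) /
              Real.sqrt (Real.log (Real.log (Ideal.absNorm m))) ≤ γ)
      (fun m => ((omegaI K m : ℝ) - Real.log (Real.log x)) /
              Real.sqrt (Real.log (Real.log x)) ≤ γ + ε) x (x ^ ((1 : ℝ) / 2))
      (fun m _ hm hm' hp => by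
        obtain ⟨a, b, c, d, e, f⟩ := hx _ hm' hm
        exact norm_step b c d f hp.2)
  have h2 : ∀ γ ε : ℝ, 0 < ε → ∀ᶠ x : ℝ in atTop, 
        (Nat.card {m : Ideal (NumberField.RingOfIntegers K) //
            m ∈ S ∧ (Ideal.absNorm m : ℝ) ≤ x ∧
            ((omegaI K m : ℝ) - Real.log (Real.log x)) /
              Real.sqrt (Real.log (Real.log x)) ≤ γ} : ℝ) /
          (countS K S x : ℝ) ≤
        (Nat.card {m : Ideal (NumberField.RingOfIntegers K) //
            m ∈ S ∧ (Ideal.absNorm m : ℝ) ≤ x ∧ 3 ≤ Ideal.absNorm m ∧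
            ((omegaI K m : ℝ) - Real.log (Real.log (Ideal.absNorm m))) /
              Real.sqrt (Real.log (Real.log (Ideal.absNorm m))) ≤ (γ + ε)} : ℝ) /
          (countS K S x : ℝ) + (countS K S (x ^ ((1 : ℝ)/2)) : ℝ) / (countS K S x : ℝ) := fun γ ε hε => by
    filter_upwards [ev γ ε hε] with x hx
    exact card_step K S
      (fun m => ((omegaI K m : ℝ) - Real.log (Real.log x)) /
              Real.sqrt (Real.log (Real.log x)) ≤ γ)
      (fun m => 3 ≤ Ideal.absNorm m ∧
            ((omegaI K m : ℝ) - Real.log (Real.log (Ideal.absNorm m))) /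
              Real.sqrt (Real.log (Real.log (Ideal.absNorm m))) ≤ γ + ε)
      x (x ^ ((1 : ℝ) / 2))
      (fun m _ hm hm' hp => by
        obtain ⟨a, b, c, d, e, f⟩ := hx _ hm' hm
        exact ⟨a, norm_step c b (by rwa [abs_sub_comm]) e hp⟩)
  constructor
  · intro h
    exact tendsto_transfer (fun γ x => (Nat.card {m : Ideal (NumberField.RingOfIntegers K) //
            m ∈ S ∧ (Ideal.absNorm m : ℝ) ≤ x ∧ 3 ≤ Ideal.absNorm m ∧
            ((omegaI K m : ℝ) - Real.log (Real.log (Ideal.absNorm m))) /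
              Real.sqrt (Real.log (Real.log (Ideal.absNorm m))) ≤ γ} : ℝ) /
          (countS K S x : ℝ)) (fun γ x => (Nat.card {m : Ideal (NumberField.RingOfIntegers K) //
            m ∈ S ∧ (Ideal.absNorm m : ℝ) ≤ x ∧
            ((omegaI K m : ℝ) - Real.log (Real.log x)) /
              Real.sqrt (Real.log (Real.log x)) ≤ γ} : ℝ) /
          (countS K S x : ℝ)) _ he gaussPhi gaussPhi_continuous h1 h2 h
  · intro h
    exact tendsto_transfer (fun γ x => (Nat.card {m : Ideal (NumberField.RingOfIntegers K) //
            m ∈ S ∧ (Ideal.absNorm m : ℝ) ≤ x ∧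
            ((omegaI K m : ℝ) - Real.log (Real.log x)) /
              Real.sqrt (Real.log (Real.log x)) ≤ γ} : ℝ) /
          (countS K S x : ℝ)) (fun γ x => (Nat.card {m : Ideal (NumberField.RingOfIntegers K) //
            m ∈ S ∧ (Ideal.absNorm m : ℝ) ≤ x ∧ 3 ≤ Ideal.absNorm m ∧
            ((omegaI K m : ℝ) - Real.log (Real.log (Ideal.absNorm m))) /
              Real.sqrt (Real.log (Real.log (Ideal.absNorm m))) ≤ γ} : ℝ) /
          (countS K S x : ℝ)) _ he gaussPhi gaussPhi_continuous h2 h1 h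

end
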